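/- Soundness of non-wellfounded μHKA: if the hypersequent Γ → S has a progressing non-wellfounded proof in μHKA (i.e., μHKA ⊢∞ Γ → S), then L(Γ) ⊆ L(S). -/

import Mathlib

/-!
Soundness is proved by infinite descent along a branch. By induction on expressions, with the
free variables replaced by closed expressions, every word in the least-fixed-point language of a
closed expression has a finite parse tree in which each fixed point is unfolded explicitly
(`sem_le_parseLang`, `exists_parseCed`). The grade of a parse is its number of unfoldings.

If `L(Γ) ⊄ L(S)`, some word has a parse from `Γ`, of some grade, but is outside `L(S)`. Every rule
passes such a counterexample from its conclusion to one of its premisses: the left rules decompose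
the parse, the letter rules strip a letter, and the right rules and weakening shrink the right-hand
language when read upwards. The grade never increases, and it drops strictly at `μ-l`
(`Rule.exists_refuted_prem`). No counterexample reaches the conclusion of a rule without premisses,
so the chase follows an infinite branch, along which only finitely many steps are `μ-l`. This
contradicts progress (`Preproof.Progressing.not_refutedAt_nil`).
-/

namespace CFPT

/-! ### Closed expressions and substitution -/

/-- `μ`-expressions over alphabet `α`, with de Bruijn indices for variables. -/
inductive Exp (α : Type) : Type
  | zero : Exp α
  | one : Exp α
  | var (n : ℕ) : Exp α
  | tok (a : α) : Exp α
  | plus (e f : Exp α) : Exp α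
  | times (e f : Exp α) : Exp α
  | mu (e : Exp α) : Exp α
  deriving DecidableEq

namespace Exp

variable {α : Type}

/-- all de Bruijn indices are `< k` -/
def ClosedUnder : ℕ → Exp α → Prop
  | _, zero => True
  | _, one => True
  | k, var n => n < k
  | _, tok _ => True
  | k, plus e f => ClosedUnder k e ∧ ClosedUnder k f
  | k, times e f => ClosedUnder k e ∧ ClosedUnder k f
  | k, mu e => ClosedUnder (k + 1) e

def Closed (e : Exp α) : Prop := ClosedUnder 0 e

/-- substitute the closed expression `g` for de Bruijn variable `d`. -/
def subst (g : Exp α) : ℕ → Exp α → Exp α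
  | _, zero => zero
  | _, one => one
  | d, var n => if n = d then g else var n
  | _, tok a => tok a
  | d, plus e f => plus (subst g d e) (subst g d f)
  | d, times e f => times (subst g d e) (subst g d f)
  | d, mu e => mu (subst g (d + 1) e)

/-- the unfolding `e(μX e)` of the fixed point `μX e` (given by its body `e`). -/
def unfold (e : Exp α) : Exp α := subst (mu e) 0 e

/-- the approximants `e^n(0)` of `μX e` (given by its body `e`):
`e^0(0) = 0` and `e^(n+1)(0) = e(e^n(0))`. -/
def iter (e : Exp α) : ℕ → Exp α
  | 0 => zero
  | n + 1 => subst (iter e n) 0 e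

/-- left-productive expressions: `p ::= a | p+q | p·e | μX p` -/
inductive LeftProductive : Exp α → Prop
  | tok (a : α) : LeftProductive (tok a)
  | plus {p q} : LeftProductive p → LeftProductive q → LeftProductive (plus p q)
  | times {p} (e) : LeftProductive p → LeftProductive (times p e)
  | mu {p} : LeftProductive p → LeftProductive (mu p)

/-- productive expressions: `p ::= a | p+q | p·e | e·p | μX p` -/
inductive Productive : Exp α → Prop
  | tok (a : α) : Productive (tok a)
  | plus {p q} : Productive p → Productive q → Productive (plus p q)
  | timesL {p} (e) : Productive p → Productive (times p e)
  | timesR {p} (e) : Productive p → Productive (times e p)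
  | mu {p} : Productive p → Productive (mu p)

/-- every free occurrence of variable `n` in the expression occurs inside a
subexpression (in which it remains free) satisfying `P`. -/
def GuardVar (P : Exp α → Prop) : ℕ → Exp α → Prop
  | _, zero => True
  | _, one => True
  | _, tok _ => True
  | n, var m => P (var m) ∨ m ≠ n
  | n, plus e f => P (plus e f) ∨ (GuardVar P n e ∧ GuardVar P n f)
  | n, times e f => P (times e f) ∨ (GuardVar P n e ∧ GuardVar P n f)
  | n, mu e => P (mu e) ∨ GuardVar P (n + 1) e

/-- each variable occurrence occurs free in a subexpression satisfying `P`. -/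
def GuardedBy (P : Exp α → Prop) : Exp α → Prop
  | zero => True
  | one => True
  | var _ => True
  | tok _ => True
  | plus e f => GuardedBy P e ∧ GuardedBy P f
  | times e f => GuardedBy P e ∧ GuardedBy P f
  | mu e => GuardVar P 0 e ∧ GuardedBy P e

/-- each variable occurrence occurs free in a productive subexpression. -/
def Guarded (e : Exp α) : Prop := GuardedBy Productive e

/-- each variable occurrence occurs free in a left-productive subexpression. -/
def LeftGuarded (e : Exp α) : Prop := GuardedBy LeftProductive e

end Exp

/-- extend an environment by a new language for variable `0`. -/
def consEnv {α} (A : Language α) (ρ : ℕ → Language α) : ℕ → Language α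
  | 0 => A
  | n + 1 => ρ n

/-- language semantics of `μ`-expressions, relative to an environment;
`μX e` denotes the least fixed point of `A ↦ ⟦e⟧(A)` (Knaster–Tarski). -/
def sem {α} (ρ : ℕ → Language α) : Exp α → Language α
  | .zero => 0
  | .one => 1
  | .var n => ρ n
  | .tok a => {[a]}
  | .plus e f => sem ρ e + sem ρ f
  | .times e f => sem ρ e * sem ρ f
  | .mu e => sInf {A : Language α | sem (consEnv A ρ) e ≤ A}

/-- the language of a (closed) expression. -/
def langOf {α} (e : Exp α) : Language α := sem (fun _ => 0) e

/-- a cedent: a finite list of expressions. -/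
abbrev Cedent (α : Type) := List (Exp α)

/-- language of a cedent: the concatenation (product) of its members' languages. -/
def langCed {α} (Γ : Cedent α) : Language α := (Γ.map langOf).prod

/-- right-hand side of a hypersequent: a finite set of cedents. -/
abbrev RHSet (α : Type) := Finset (Cedent α)

/-- language of a RHS: the union (sum) of the languages of its cedents. -/
def langRHS {α} (S : RHSet α) : Language α := S.sup langCed

def CedClosed {α} (Γ : Cedent α) : Prop := ∀ e ∈ Γ, e.Closed
def CedGuarded {α} (Γ : Cedent α) : Prop := ∀ e ∈ Γ, e.Guarded

/-- a hypersequent `Γ → S`. -/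
structure Sqt (α : Type) : Type where
  lhs : Cedent α
  rhs : RHSet α

/-- validity of a hypersequent in the language model. -/
def Sqt.Valid {α} (s : Sqt α) : Prop := langCed s.lhs ≤ langRHS s.rhs

def Sqt.ClosedSeq {α} (s : Sqt α) : Prop :=
  CedClosed s.lhs ∧ ∀ Δ ∈ s.rhs, CedClosed Δ

def Sqt.GuardedSeq {α} (s : Sqt α) : Prop :=
  CedGuarded s.lhs ∧ ∀ Δ ∈ s.rhs, CedGuarded Δ

/-- rule instances of the hypersequential system `μHKA`. -/
inductive Rule (α : Type) : Type
  | init : Rule α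
  | wr (Γ : Cedent α) (S : RHSet α) (Δ : Cedent α) : Rule α
  | kl (a : α) (Γ : Cedent α) (S : RHSet α) : Rule α
  | kr (a : α) (Γ : Cedent α) (S : RHSet α) : Rule α
  | zeroL (Γ Γ' : Cedent α) (S : RHSet α) : Rule α
  | oneL (Γ Γ' : Cedent α) (S : RHSet α) : Rule α
  | timesL (Γ : Cedent α) (e f : Exp α) (Γ' : Cedent α) (S : RHSet α) : Rule α
  | plusL (Γ : Cedent α) (e f : Exp α) (Γ' : Cedent α) (S : RHSet α) : Rule α
  | muL (Γ : Cedent α) (e : Exp α) (Γ' : Cedent α) (S : RHSet α) : Rule α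
  | zeroR (Γ : Cedent α) (S : RHSet α) (Δ Δ' : Cedent α) : Rule α
  | oneR (Γ : Cedent α) (S : RHSet α) (Δ Δ' : Cedent α) : Rule α
  | timesR (Γ : Cedent α) (S : RHSet α) (Δ : Cedent α) (e f : Exp α) (Δ' : Cedent α) : Rule α
  | plusR (Γ : Cedent α) (S : RHSet α) (Δ : Cedent α) (e f : Exp α) (Δ' : Cedent α) : Rule α
  | muR (Γ : Cedent α) (S : RHSet α) (Δ : Cedent α) (e : Exp α) (Δ' : Cedent α) : Rule α

namespace Rule

variable {α : Type} [DecidableEq α]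

/-- conclusion of a rule instance. -/
def concl : Rule α → Sqt α
  | init => ⟨[], {[]}⟩
  | wr Γ S Δ => ⟨Γ, insert Δ S⟩
  | kl a Γ S => ⟨.tok a :: Γ, S.image (Exp.tok a :: ·)⟩
  | kr a Γ S => ⟨Γ ++ [.tok a], S.image (· ++ [Exp.tok a])⟩
  | zeroL Γ Γ' S => ⟨Γ ++ .zero :: Γ', S⟩
  | oneL Γ Γ' S => ⟨Γ ++ .one :: Γ', S⟩
  | timesL Γ e f Γ' S => ⟨Γ ++ .times e f :: Γ', S⟩
  | plusL Γ e f Γ' S => ⟨Γ ++ .plus e f :: Γ', S⟩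
  | muL Γ e Γ' S => ⟨Γ ++ .mu e :: Γ', S⟩
  | zeroR Γ S Δ Δ' => ⟨Γ, insert (Δ ++ .zero :: Δ') S⟩
  | oneR Γ S Δ Δ' => ⟨Γ, insert (Δ ++ .one :: Δ') S⟩
  | timesR Γ S Δ e f Δ' => ⟨Γ, insert (Δ ++ .times e f :: Δ') S⟩
  | plusR Γ S Δ e f Δ' => ⟨Γ, insert (Δ ++ .plus e f :: Δ') S⟩
  | muR Γ S Δ e Δ' => ⟨Γ, insert (Δ ++ .mu e :: Δ') S⟩

/-- list of premisses of a rule instance. -/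
def prems : Rule α → List (Sqt α)
  | init => []
  | wr Γ S _ => [⟨Γ, S⟩]
  | kl _ Γ S => [⟨Γ, S⟩]
  | kr _ Γ S => [⟨Γ, S⟩]
  | zeroL _ _ _ => []
  | oneL Γ Γ' S => [⟨Γ ++ Γ', S⟩]
  | timesL Γ e f Γ' S => [⟨Γ ++ e :: f :: Γ', S⟩]
  | plusL Γ e f Γ' S => [⟨Γ ++ e :: Γ', S⟩, ⟨Γ ++ f :: Γ', S⟩]
  | muL Γ e Γ' S => [⟨Γ ++ e.unfold :: Γ', S⟩]
  | zeroR Γ S _ _ => [⟨Γ, S⟩]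
  | oneR Γ S Δ Δ' => [⟨Γ, insert (Δ ++ Δ') S⟩]
  | timesR Γ S Δ e f Δ' => [⟨Γ, insert (Δ ++ e :: f :: Δ') S⟩]
  | plusR Γ S Δ e f Δ' => [⟨Γ, insert (Δ ++ e :: Δ') (insert (Δ ++ f :: Δ') S)⟩]
  | muR Γ S Δ e Δ' => [⟨Γ, insert (Δ ++ e.unfold :: Δ') S⟩]

/-- the rule is an instance of `μ-l`. -/
def IsMuL : Rule α → Prop
  | muL _ _ _ _ => True
  | _ => False

/-- logical rules (neither `init`, weakening, nor `k` rules). -/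
def IsLogical : Rule α → Prop
  | init => False
  | wr _ _ _ => False
  | kl _ _ _ => False
  | kr _ _ _ => False
  | _ => True

/-- immediate ancestry on the LHS: the formula at position `j` of the LHS of a
premiss is the immediate ancestor of the formula at position `ancL r j` of the
LHS of the conclusion. -/
def ancL : Rule α → ℕ → ℕ
  | kl _ _ _ => fun j => j + 1
  | oneL Γ _ _ => fun j => if j < Γ.length then j else j + 1
  | timesL Γ _ _ _ _ => fun j =>
      if j < Γ.length then j else if j ≤ Γ.length + 1 then Γ.length else j - 1
  | _ => fun j => j

/-- position `j` of the LHS of the conclusion is principal for a `μ-l` step. -/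
def IsPrincMuL : Rule α → ℕ → Prop
  | muL Γ _ _ _, j => j = Γ.length
  | _, _ => False

end Rule

/-- a (non-wellfounded) preproof of `μHKA`: a possibly infinite tree of rule
instances, represented by its labelling of tree positions. -/
structure Preproof (α : Type) [DecidableEq α] : Type where
  rule : List ℕ → Option (Rule α)
  root_isSome : (rule []).isSome
  children_concl : ∀ p r, rule p = some r → ∀ (i : ℕ) (h : i < r.prems.length),
    ∃ r', rule (p ++ [i]) = some r' ∧ r'.concl = r.prems.get ⟨i, h⟩
  children_none : ∀ p r, rule p = some r → ∀ i : ℕ, r.prems.length ≤ i → rule (p ++ [i]) = none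
  grounded : ∀ p i, (rule (p ++ [i])).isSome → (rule p).isSome

namespace Preproof

variable {α : Type} [DecidableEq α]

/-- the preproof has endsequent `s`. -/
def Concl (P : Preproof α) (s : Sqt α) : Prop :=
  ∃ r, P.rule [] = some r ∧ r.concl = s

/-- the node of a branch `b` at depth `n`. -/
def pathOf (b : ℕ → ℕ) (n : ℕ) : List ℕ := (List.range n).map b

/-- `b` describes an infinite branch of `P`. -/
def IsBranch (P : Preproof α) (b : ℕ → ℕ) : Prop :=
  ∀ n, (P.rule (pathOf b n)).isSome

/-- `P` is progressing: every infinite branch has infinitely many `μ-l` steps. -/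
def Progressing (P : Preproof α) : Prop :=
  ∀ b, P.IsBranch b → ∀ N, ∃ n, N ≤ n ∧ ∃ r, P.rule (pathOf b n) = some r ∧ r.IsMuL

end Preproof

/-- `μHKA ⊢∞ s` : the hypersequent `s` has a progressing non-wellfounded
(`∞`-)proof in `μHKA`. -/
def ProofInf {α : Type} [DecidableEq α] (s : Sqt α) : Prop :=
  ∃ P : Preproof α, P.Concl s ∧ P.Progressing

/-- wellfounded (possibly infinitely branching) derivability in `μHKA_ω`,
the extension of `μHKA` by the `ω`-rule. -/
inductive DerivW {α : Type} [DecidableEq α] : Sqt α → Prop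
  | rule (r : Rule α) : (∀ s ∈ r.prems, DerivW s) → DerivW r.concl
  | omega (Γ : Cedent α) (e : Exp α) (Γ' : Cedent α) (S : RHSet α) :
      (∀ n : ℕ, DerivW ⟨Γ ++ Exp.iter e n :: Γ', S⟩) → DerivW ⟨Γ ++ .mu e :: Γ', S⟩

/-- the equational theory `μCA` of `μ`-continuous Chomsky algebras:
idempotent semiring (dioid) axioms together with `μ`-continuity. -/
inductive CA {α : Type} : Exp α → Exp α → Prop
  | refl (e) : CA e e
  | symm {e f} : CA e f → CA f e
  | trans {e f g} : CA e f → CA f g → CA e g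
  | congPlus {e e' f f'} : CA e e' → CA f f' → CA (.plus e f) (.plus e' f')
  | congTimes {e e' f f'} : CA e e' → CA f f' → CA (.times e f) (.times e' f')
  | plusAssoc (e f g) : CA (.plus (.plus e f) g) (.plus e (.plus f g))
  | plusComm (e f) : CA (.plus e f) (.plus f e)
  | plusIdem (e) : CA (.plus e e) e
  | plusZero (e) : CA (.plus e .zero) e
  | timesAssoc (e f g) : CA (.times (.times e f) g) (.times e (.times f g))
  | timesOne (e) : CA (.times e .one) e
  | oneTimes (e) : CA (.times .one e) e
  | timesZero (e) : CA (.times e .zero) .zero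
  | zeroTimes (e) : CA (.times .zero e) .zero
  | distL (e f g) : CA (.times e (.plus f g)) (.plus (.times e f) (.times e g))
  | distR (e f g) : CA (.times (.plus e f) g) (.plus (.times e g) (.times f g))
  | muContLe (e f g : Exp α) (n : ℕ) :
      CA (.plus (.times e (.times (Exp.iter f n) g)) (.times e (.times (.mu f) g)))
         (.times e (.times (.mu f) g))
  | muContSup (e f g h : Exp α) :
      (∀ n : ℕ, CA (.plus (.times e (.times (Exp.iter f n) g)) h) h) →
      CA (.plus (.times e (.times (.mu f) g)) h) h

/-- the natural order `e ≤ f` of `μCA`, i.e. `e + f = f`. -/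
def CAle {α : Type} (e f : Exp α) : Prop := CA (.plus e f) f

/-- the product `∏Γ` of a cedent as an expression. -/
def prodCed {α} (Γ : Cedent α) : Exp α := Γ.foldr .times .one

/-- the sum `Σ_{Δ∈S} ∏Δ` of a RHS as an expression. -/
noncomputable def sumRHS {α} (S : RHSet α) : Exp α := (S.toList.map prodCed).foldr .plus .zero


namespace Exp

variable {α : Type}

theorem ClosedUnder.mono {e : Exp α} : ∀ {k l : ℕ}, k ≤ l → ClosedUnder k e → ClosedUnder l e := by
  induction e with
  | zero => intros; trivial
  | one => intros; trivial
  | tok a => intros; trivial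
  | var n => intro k l h he; exact lt_of_lt_of_le (show n < k from he) h
  | plus e f ihe ihf => intro k l h he; exact ⟨ihe h he.1, ihf h he.2⟩
  | times e f ihe ihf => intro k l h he; exact ⟨ihe h he.1, ihf h he.2⟩
  | mu e ih => intro k l h he; exact ih (Nat.succ_le_succ h) (show ClosedUnder (k + 1) e from he)

theorem subst_of_closedUnder (g : Exp α) {e : Exp α} :
    ∀ {d : ℕ}, ClosedUnder d e → subst g d e = e := by
  induction e with
  | zero => intros; rfl
  | one => intros; rfl
  | tok a => intros; rfl
  | var n => intro d h; exact if_neg (ne_of_lt (show n < d from h))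
  | plus e f ihe ihf => intro d h; simp only [subst, ihe h.1, ihf h.2]
  | times e f ihe ihf => intro d h; simp only [subst, ihe h.1, ihf h.2]
  | mu e ih => intro d h; simp only [subst, ih (show ClosedUnder (d + 1) e from h)]

theorem ClosedUnder.subst {g : Exp α} (hg : g.Closed) {e : Exp α} :
    ∀ {d : ℕ}, ClosedUnder (d + 1) e → ClosedUnder d (subst g d e) := by
  induction e with
  | zero => intros; trivial
  | one => intros; trivial
  | tok a => intros; trivial
  | var n =>
    intro d h
    have h' : n < d + 1 := h
    by_cases hn : n = d
    · simpa [Exp.subst, hn] using hg.mono (Nat.zero_le d)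
    · simp only [Exp.subst, hn, if_false]
      change n < d
      omega
  | plus e f ihe ihf => intro d h; exact ⟨ihe h.1, ihf h.2⟩
  | times e f ihe ihf => intro d h; exact ⟨ihe h.1, ihf h.2⟩
  | mu e ih => intro d h; exact ih (d := d + 1) h

theorem Closed.unfold {e : Exp α} (h : (mu e).Closed) : e.unfold.Closed :=
  ClosedUnder.subst h h

/-- Simultaneous substitution under `k` binders: the `k` bound indices are kept, and index `k + i`
is replaced by `σ i`. Nothing is shifted, so this is capture-avoiding only for closed `σ i`. -/
def psubst (σ : ℕ → Exp α) : ℕ → Exp α → Exp α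
  | _, zero => zero
  | _, one => one
  | k, var n => if n < k then var n else σ (n - k)
  | _, tok a => tok a
  | k, plus e f => plus (psubst σ k e) (psubst σ k f)
  | k, times e f => times (psubst σ k e) (psubst σ k f)
  | k, mu e => mu (psubst σ (k + 1) e)

/-- Prepend an expression to a substitution. -/
def scons (g : Exp α) (σ : ℕ → Exp α) : ℕ → Exp α
  | 0 => g
  | n + 1 => σ n

theorem subst_psubst {g : Exp α} {σ : ℕ → Exp α} (hσ : ∀ i, (σ i).Closed) (e : Exp α) :
    ∀ d : ℕ, subst g d (psubst σ (d + 1) e) = psubst (scons g σ) d e := by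
  induction e with
  | zero => intros; rfl
  | one => intros; rfl
  | tok a => intros; rfl
  | var n =>
    intro d
    rcases lt_trichotomy n d with h | h | h
    · simp [psubst, subst, h, h.ne, Nat.lt_succ_of_lt h]
    · subst h
      simp [psubst, subst, scons]
    · obtain ⟨m, rfl⟩ := Nat.exists_eq_add_of_lt h
      have h₁ : ¬ d + m + 1 < d + 1 := by omega
      have h₂ : ¬ d + m + 1 < d := by omega
      have h₃ : d + m + 1 - (d + 1) = m := by omega
      have h₄ : d + m + 1 - d = m + 1 := by omega
      simp only [psubst, h₁, h₂, h₃, h₄, if_false, scons]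
      exact subst_of_closedUnder g ((hσ m).mono (Nat.zero_le d))
  | plus e f ihe ihf => intro d; simp only [psubst, subst, ihe, ihf]
  | times e f ihe ihf => intro d; simp only [psubst, subst, ihe, ihf]
  | mu e ih => intro d; simp only [psubst, subst, ih]

theorem psubst_of_closedUnder (σ : ℕ → Exp α) {e : Exp α} :
    ∀ {k : ℕ}, ClosedUnder k e → psubst σ k e = e := by
  induction e with
  | zero => intros; rfl
  | one => intros; rfl
  | tok a => intros; rfl
  | var n => intro d h; exact if_pos (show n < d from h)
  | plus e f ihe ihf => intro d h; simp only [psubst, ihe h.1, ihf h.2]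
  | times e f ihe ihf => intro d h; simp only [psubst, ihe h.1, ihf h.2]
  | mu e ih => intro d h; simp only [psubst, ih (show ClosedUnder (d + 1) e from h)]

theorem ClosedUnder.psubst {σ : ℕ → Exp α} (hσ : ∀ i, (σ i).Closed) (e : Exp α) :
    ∀ k : ℕ, ClosedUnder k (psubst σ k e) := by
  induction e with
  | zero => intros; trivial
  | one => intros; trivial
  | tok a => intros; trivial
  | var n =>
    intro k
    by_cases h : n < k
    · rw [Exp.psubst, if_pos h]
      exact h
    · rw [Exp.psubst, if_neg h]
      exact (hσ _).mono (Nat.zero_le k)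
  | plus e f ihe ihf => intro k; exact ⟨ihe k, ihf k⟩
  | times e f ihe ihf => intro k; exact ⟨ihe k, ihf k⟩
  | mu e ih => intro k; exact ih (k + 1)

end Exp

/-! ### The semantics validates unfolding -/

section Semantics

variable {α : Type}

theorem sem_mono (e : Exp α) : ∀ {ρ ρ' : ℕ → Language α}, (∀ n, ρ n ≤ ρ' n) →
    sem ρ e ≤ sem ρ' e := by
  induction e with
  | zero => intros; exact le_rfl
  | one => intros; exact le_rfl
  | tok a => intros; exact le_rfl
  | var n => intro ρ ρ' h; exact h n
  | plus e f ihe ihf => intro ρ ρ' h; exact sup_le_sup (ihe h) (ihf h)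
  | times e f ihe ihf => intro ρ ρ' h; exact Set.image2_subset (ihe h) (ihf h)
  | mu e ih =>
    intro ρ ρ' h
    refine le_sInf fun A hA => sInf_le (le_trans (ih fun n => ?_) hA)
    cases n with
    | zero => exact le_rfl
    | succ n => exact h n

theorem sem_congr {e : Exp α} : ∀ {k : ℕ} {ρ ρ' : ℕ → Language α}, e.ClosedUnder k →
    (∀ n < k, ρ n = ρ' n) → sem ρ e = sem ρ' e := by
  induction e with
  | zero => intros; rfl
  | one => intros; rfl
  | tok a => intros; rfl
  | var n => intro k ρ ρ' hk h; exact h n hk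
  | plus e f ihe ihf => intro k ρ ρ' hk h; simp only [sem, ihe hk.1 h, ihf hk.2 h]
  | times e f ihe ihf => intro k ρ ρ' hk h; simp only [sem, ihe hk.1 h, ihf hk.2 h]
  | mu e ih =>
    intro k ρ ρ' hk h
    have key : ∀ A, sem (consEnv A ρ) e = sem (consEnv A ρ') e := fun A =>
      ih (k := k + 1) hk fun n hn => by
        cases n with
        | zero => rfl
        | succ n => exact h n (by omega)
    simp only [sem, key]

/-- Substitution lemma. As `Exp.subst` leaves the other indices unshifted, it corresponds to
updating the environment at `d`. -/
theorem sem_subst {g : Exp α} (hg : g.Closed) (e : Exp α) : ∀ (d : ℕ) (ρ : ℕ → Language α),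
    sem ρ (Exp.subst g d e) = sem (Function.update ρ d (langOf g)) e := by
  induction e with
  | zero => intros; rfl
  | one => intros; rfl
  | tok a => intros; rfl
  | var n =>
    intro d ρ
    by_cases h : n = d
    · subst h
      simp only [Exp.subst, sem, if_true, Function.update_self]
      exact sem_congr hg (by simp)
    · simp [Exp.subst, sem, h]
  | plus e f ihe ihf => intro d ρ; simp only [Exp.subst, sem, ihe, ihf]
  | times e f ihe ihf => intro d ρ; simp only [Exp.subst, sem, ihe, ihf]
  | mu e ih =>
    intro d ρ
    have key : ∀ A, Function.update (consEnv A ρ) (d + 1) (langOf g) =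
        consEnv A (Function.update ρ d (langOf g)) := by
      intro A
      funext n
      cases n with
      | zero => simp [consEnv]
      | succ n => simp [consEnv, Function.update_apply]
    simp only [Exp.subst, sem, ih, key]

/-- The easy half of the fixed-point property: `μX e` is a pre-fixed point of `e`. -/
theorem langOf_unfold_le {e : Exp α} (h : (Exp.mu e).Closed) :
    langOf e.unfold ≤ langOf (.mu e) := by
  have henv : Function.update (fun _ : ℕ => (0 : Language α)) 0 (langOf (.mu e)) =
      consEnv (langOf (.mu e)) (fun _ => (0 : Language α)) := by
    funext n
    cases n <;> simp [consEnv]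
  rw [langOf, Exp.unfold, sem_subst h, henv]
  refine le_sInf fun A hA => le_trans (sem_mono e fun n => ?_) hA
  cases n with
  | zero => exact sInf_le hA
  | succ n => exact le_rfl

theorem langCed_nil : langCed ([] : Cedent α) = 1 := rfl

theorem langCed_cons (e : Exp α) (Γ : Cedent α) : langCed (e :: Γ) = langOf e * langCed Γ := by
  simp [langCed]

theorem langCed_append (Γ Δ : Cedent α) : langCed (Γ ++ Δ) = langCed Γ * langCed Δ := by
  simp [langCed]

theorem mem_langRHS {S : RHSet α} {w : List α} :
    w ∈ langRHS S ↔ ∃ Δ ∈ S, w ∈ langCed Δ := by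
  classical
  induction S using Finset.induction_on with
  | empty => simp [langRHS]; exact fun h => h
  | insert Δ S _ ih =>
    have : langRHS (insert Δ S) = langCed Δ + langRHS S := Finset.sup_insert
    rw [this, Language.mem_add, ih]
    simp

/-- Replacing part of a cedent in the middle by something with a larger language. -/
theorem langCed_middle_mono {Δ Θ Θ' Δ' : Cedent α} (h : langCed Θ ≤ langCed Θ') :
    langCed (Δ ++ (Θ ++ Δ')) ≤ langCed (Δ ++ (Θ' ++ Δ')) := by
  simp only [langCed_append]
  exact Set.image2_subset le_rfl (Set.image2_subset h le_rfl)

theorem langRHS_insert_mono [DecidableEq α] {S : RHSet α} {Δ Δ' : Cedent α}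
    (h : langCed Δ ≤ langCed Δ') : langRHS (insert Δ S) ≤ langRHS (insert Δ' S) := by
  intro w hw
  obtain ⟨Θ, hΘ, hwΘ⟩ := mem_langRHS.1 hw
  rcases Finset.mem_insert.1 hΘ with rfl | hΘ
  · exact mem_langRHS.2 ⟨Δ', Finset.mem_insert_self _ _, h hwΘ⟩
  · exact mem_langRHS.2 ⟨Θ, Finset.mem_insert_of_mem hΘ, hwΘ⟩

theorem langRHS_mono {S T : RHSet α} (h : S ⊆ T) : langRHS S ≤ langRHS T := by
  intro w hw
  obtain ⟨Θ, hΘ, hw⟩ := mem_langRHS.1 hw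
  exact mem_langRHS.2 ⟨Θ, h hΘ, hw⟩

end Semantics

/-! ### Parses, graded by the number of unfoldings -/

section Parse

variable {α : Type}

/-- `Parse e w n`: the word `w` has a finite parse tree from `e` in which exactly `n` nodes unfold
a fixed point. -/
inductive Parse : Exp α → List α → ℕ → Prop
  | one : Parse .one [] 0
  | tok (a : α) : Parse (.tok a) [a] 0
  | plusL {e f w n} : Parse e w n → Parse (.plus e f) w n
  | plusR {e f w n} : Parse f w n → Parse (.plus e f) w n
  | times {e f u v m n} : Parse e u m → Parse f v n → Parse (.times e f) (u ++ v) (m + n)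
  | mu {e w n} : Parse e.unfold w n → Parse (.mu e) w (n + 1)

/-- Parses of a cedent: a parse of each member, with words concatenated and unfoldings added. -/
inductive ParseCed : Cedent α → List α → ℕ → Prop
  | nil : ParseCed [] [] 0
  | cons {e Γ u v m n} : Parse e u m → ParseCed Γ v n → ParseCed (e :: Γ) (u ++ v) (m + n)

/-- The language of the words that have a parse from `e`. -/
def parseLang (e : Exp α) : Language α := {w | ∃ n, Parse e w n}

/-- Under a closed substitution `σ`, interpreting each variable by the parsable words of `σ i`
yields only parsable words. At a fixed point, parsable words form a pre-fixed point since the `mu`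
constructor folds a parse of the unfolding. -/
theorem sem_le_parseLang (e : Exp α) : ∀ (σ : ℕ → Exp α), (∀ i, (σ i).Closed) →
    sem (fun i => parseLang (σ i)) e ≤ parseLang (Exp.psubst σ 0 e) := by
  induction e with
  | zero => intro σ _ w hw; exact hw.elim
  | one =>
    intro σ _ w hw
    obtain rfl : w = [] := hw
    exact ⟨0, .one⟩
  | tok a =>
    intro σ _ w hw
    obtain rfl : w = [a] := hw
    exact ⟨0, .tok a⟩
  | var n => intro σ _; exact le_rfl
  | plus e f ihe ihf =>
    intro σ hσ w hw
    rcases hw with hw | hw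
    · obtain ⟨n, h⟩ := ihe σ hσ hw
      exact ⟨n, .plusL h⟩
    · obtain ⟨n, h⟩ := ihf σ hσ hw
      exact ⟨n, .plusR h⟩
  | times e f ihe ihf =>
    intro σ hσ w hw
    obtain ⟨u, hu, v, hv, rfl⟩ := Language.mem_mul.1 hw
    obtain ⟨m, hm⟩ := ihe σ hσ hu
    obtain ⟨n, hn⟩ := ihf σ hσ hv
    exact ⟨m + n, .times hm hn⟩
  | mu e ih =>
    intro σ hσ
    let g : Exp α := .mu (Exp.psubst σ 1 e)
    have hg : g.Closed := Exp.ClosedUnder.psubst hσ e 1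
    have hcl : ∀ i, (Exp.scons g σ i).Closed := fun i => by
      cases i with
      | zero => exact hg
      | succ i => exact hσ i
    have henv : (fun i => parseLang (Exp.scons g σ i)) =
        consEnv (parseLang g) (fun i => parseLang (σ i)) := by
      funext i
      cases i <;> rfl
    have hih := ih (Exp.scons g σ) hcl
    rw [henv, ← Exp.subst_psubst hσ] at hih
    refine sInf_le fun w hw => ?_
    obtain ⟨n, hn⟩ := hih hw
    exact ⟨n + 1, .mu hn⟩

theorem exists_parse {e : Exp α} (he : e.Closed) {w : List α} (hw : w ∈ langOf e) :
    ∃ n, Parse e w n := by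
  have h₁ := sem_le_parseLang e (fun _ => .zero) (fun _ => trivial)
  rw [Exp.psubst_of_closedUnder _ he] at h₁
  exact h₁ (sem_mono e (fun _ => bot_le) hw)

theorem exists_parseCed {Γ : Cedent α} : ∀ (_ : CedClosed Γ) {w : List α} (_ : w ∈ langCed Γ),
    ∃ n, ParseCed Γ w n := by
  induction Γ with
  | nil =>
    intro _ w hw
    obtain rfl : w = [] := hw
    exact ⟨0, .nil⟩
  | cons e Γ ih =>
    intro hΓ w hw
    rw [langCed_cons] at hw
    obtain ⟨u, hu, v, hv, rfl⟩ := Language.mem_mul.1 hw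
    obtain ⟨m, hm⟩ := exists_parse (hΓ e (by simp)) hu
    obtain ⟨n, hn⟩ := ih (fun f hf => hΓ f (by simp [hf])) hv
    exact ⟨m + n, .cons hm hn⟩

theorem ParseCed.append {Γ Δ : Cedent α} {u v : List α} {m n : ℕ} (hΓ : ParseCed Γ u m)
    (hΔ : ParseCed Δ v n) : ParseCed (Γ ++ Δ) (u ++ v) (m + n) := by
  induction hΓ with
  | nil => simpa using hΔ
  | cons h _ ih => simpa only [List.cons_append, List.append_assoc, Nat.add_assoc] using ParseCed.cons h ih

theorem ParseCed.of_append {Γ Δ : Cedent α} : ∀ {w : List α} {n : ℕ}, ParseCed (Γ ++ Δ) w n →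
    ∃ u v k l, w = u ++ v ∧ n = k + l ∧ ParseCed Γ u k ∧ ParseCed Δ v l := by
  induction Γ with
  | nil => intro w n h; exact ⟨[], w, 0, n, by simp, by simp, .nil, h⟩
  | cons e Γ ih =>
    intro w n h
    cases h with
    | @cons _ _ u v m n he h =>
      obtain ⟨u', v', k, l, rfl, rfl, h₁, h₂⟩ := ih h
      exact ⟨u ++ u', v', m + k, l, by simp, by omega, .cons he h₁, h₂⟩

/-- Inversion of a parse at a designated member of the cedent, with a way to plug in parses of the
same word from other cedents. -/
theorem ParseCed.focus {Γ Γ' : Cedent α} {e : Exp α} {w : List α} {n : ℕ}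
    (h : ParseCed (Γ ++ e :: Γ') w n) :
    ∃ u k l, Parse e u k ∧ n = k + l ∧
      ∀ (Θ : Cedent α) (j : ℕ), ParseCed Θ u j → ParseCed (Γ ++ (Θ ++ Γ')) w (j + l) := by
  obtain ⟨u, v, k, l, rfl, rfl, h₁, h₂⟩ := h.of_append
  cases h₂ with
  | @cons _ _ u' v' k' l' he h₂ =>
    refine ⟨u', k', k + l', he, by omega, fun Θ j hΘ => ?_⟩
    have := h₁.append (hΘ.append h₂)
    rwa [show j + (k + l') = k + (j + l') by omega]

theorem Parse.single {e : Exp α} {w : List α} {n : ℕ} (h : Parse e w n) : ParseCed [e] w n := by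
  simpa using ParseCed.cons h .nil

end Parse

/-! ### Counterexamples propagate upwards -/

section Branch

variable {α : Type}

/-- A graded counterexample to the sequent `s`: `s` is closed, and some word has a parse with `n`
unfoldings from the left-hand side but is not in the language of the right-hand side. -/
def Refuted (s : Sqt α) (n : ℕ) : Prop :=
  s.ClosedSeq ∧ ∃ w, ParseCed s.lhs w n ∧ w ∉ langRHS s.rhs

theorem Refuted.of_rhs {Γ : Cedent α} {S T : RHSet α} {n : ℕ} (h : Refuted ⟨Γ, T⟩ n)
    (hc : Sqt.ClosedSeq ⟨Γ, S⟩) (hST : langRHS S ≤ langRHS T) : Refuted ⟨Γ, S⟩ n := by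
  obtain ⟨-, w, hw, hn⟩ := h
  exact ⟨hc, w, hw, fun h => hn (hST h)⟩

theorem cedClosed_append {Γ Δ : Cedent α} : CedClosed (Γ ++ Δ) ↔ CedClosed Γ ∧ CedClosed Δ := by
  simp only [CedClosed, List.mem_append, or_imp, forall_and]

theorem cedClosed_cons {e : Exp α} {Γ : Cedent α} :
    CedClosed (e :: Γ) ↔ e.Closed ∧ CedClosed Γ := by
  simp [CedClosed]

variable [DecidableEq α]

/-- Premisses of a rule with closed conclusion are closed. -/
theorem Rule.closed_prems {r : Rule α} (h : r.concl.ClosedSeq) : ∀ s ∈ r.prems, s.ClosedSeq := by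
  have hu : ∀ {e : Exp α}, (Exp.mu e).Closed → e.unfold.Closed := Exp.Closed.unfold
  have hp : ∀ {e f : Exp α}, (Exp.plus e f).Closed ↔ e.Closed ∧ f.Closed := Iff.rfl
  have ht : ∀ {e f : Exp α}, (Exp.times e f).Closed ↔ e.Closed ∧ f.Closed := Iff.rfl
  cases r <;>
    simp_all [Rule.concl, Rule.prems, Sqt.ClosedSeq, cedClosed_append, cedClosed_cons]

/-- A counterexample to the conclusion of a rule yields one to some premiss, with no more
unfoldings, and strictly fewer if the rule is `μ-l`. -/
theorem Rule.exists_refuted_prem {r : Rule α} {n : ℕ} (h : Refuted r.concl n) :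
    ∃ s ∈ r.prems, ∃ n' ≤ n, (r.IsMuL → n' < n) ∧ Refuted s n' := by
  have hcl := Rule.closed_prems h.1
  have hmid : ∀ {Δ Θ Θ' Δ' : Cedent α} {S : RHSet α}, langCed Θ ≤ langCed Θ' →
      langRHS (insert (Δ ++ (Θ ++ Δ')) S) ≤ langRHS (insert (Δ ++ (Θ' ++ Δ')) S) :=
    fun h => langRHS_insert_mono (langCed_middle_mono h)
  have right : ∀ {Γ : Cedent α} {S T : RHSet α}, Refuted ⟨Γ, T⟩ n → Sqt.ClosedSeq ⟨Γ, S⟩ →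
      langRHS S ≤ langRHS T → ∃ s ∈ [Sqt.mk Γ S], ∃ n' ≤ n, (False → n' < n) ∧ Refuted s n' :=
    fun h hc hST => ⟨_, by simp, n, le_rfl, False.elim, Refuted.of_rhs h hc hST⟩
  cases r with
  | init =>
    obtain ⟨-, w, hw, hn⟩ := h
    cases hw
    exact (hn (mem_langRHS.2 ⟨[], by simp [Rule.concl], rfl⟩)).elim
  | wr Γ S Δ =>
    exact right h (hcl _ (by simp [Rule.prems])) (langRHS_mono (Finset.subset_insert _ _))
  | kl a Γ S =>
    obtain ⟨-, w, hw, hn⟩ := h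
    cases hw with
    | @cons _ _ u v k l he hw =>
      cases he
      refine ⟨⟨Γ, S⟩, by simp [Rule.prems], l, by omega, False.elim,
        hcl _ (by simp [Rule.prems]), v, hw,
        fun hv => hn ?_⟩
      obtain ⟨Δ, hΔ, hv⟩ := mem_langRHS.1 hv
      refine mem_langRHS.2 ⟨.tok a :: Δ, Finset.mem_image_of_mem _ hΔ, ?_⟩
      rw [langCed_cons]
      exact Language.append_mem_mul rfl hv
  | kr a Γ S =>
    obtain ⟨-, w, hw, hn⟩ := h
    obtain ⟨v, u, l, k, rfl, rfl, hv₀, ha⟩ := ParseCed.of_append hw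
    cases ha with
    | @cons _ _ u u' k k' he hnil =>
      cases hnil
      cases he
      refine ⟨⟨Γ, S⟩, by simp [Rule.prems], l, by omega, False.elim,
        hcl _ (by simp [Rule.prems]), v, hv₀,
        fun hv => hn ?_⟩
      obtain ⟨Δ, hΔ, hv⟩ := mem_langRHS.1 hv
      refine mem_langRHS.2 ⟨Δ ++ [.tok a], Finset.mem_image_of_mem _ hΔ, ?_⟩
      rw [langCed_append, langCed_cons, langCed_nil, mul_one]
      exact Language.append_mem_mul hv rfl
  | zeroL Γ Γ' S =>
    obtain ⟨-, w, hw, hn⟩ := h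
    obtain ⟨u, k, l, he, -⟩ := ParseCed.focus hw
    cases he
  | oneL Γ Γ' S =>
    obtain ⟨-, w, hw, hn⟩ := h
    obtain ⟨u, k, l, he, rfl, plug⟩ := ParseCed.focus hw
    cases he
    exact ⟨⟨Γ ++ Γ', S⟩, by simp [Rule.prems], _, le_rfl, False.elim,
      hcl _ (by simp [Rule.prems]), w, plug [] 0 .nil, hn⟩
  | timesL Γ e f Γ' S =>
    obtain ⟨-, w, hw, hn⟩ := h
    obtain ⟨u, k, l, he, rfl, plug⟩ := ParseCed.focus hw
    cases he with
    | times he hf =>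
      exact ⟨⟨Γ ++ e :: f :: Γ', S⟩, by simp [Rule.prems], _, le_rfl, False.elim,
        hcl _ (by simp [Rule.prems]), w, plug [e, f] _ (.cons he hf.single), hn⟩
  | plusL Γ e f Γ' S =>
    obtain ⟨-, w, hw, hn⟩ := h
    obtain ⟨u, k, l, he, rfl, plug⟩ := ParseCed.focus hw
    cases he with
    | plusL he =>
      exact ⟨⟨Γ ++ e :: Γ', S⟩, by simp [Rule.prems], _, le_rfl, False.elim,
        hcl _ (by simp [Rule.prems]), w, plug [e] _ he.single, hn⟩
    | plusR hf =>
      exact ⟨⟨Γ ++ f :: Γ', S⟩, by simp [Rule.prems], _, le_rfl, False.elim,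
        hcl _ (by simp [Rule.prems]), w, plug [f] _ hf.single, hn⟩
  | muL Γ e Γ' S =>
    obtain ⟨-, w, hw, hn⟩ := h
    obtain ⟨u, k, l, he, rfl, plug⟩ := ParseCed.focus hw
    cases he with
    | @mu _ _ k he =>
      exact ⟨⟨Γ ++ e.unfold :: Γ', S⟩, by simp [Rule.prems], k + l, by omega, fun _ => by omega,
        hcl _ (by simp [Rule.prems]), w, plug [e.unfold] _ he.single, hn⟩
  | zeroR Γ S Δ Δ' =>
    exact right h (hcl _ (by simp [Rule.prems])) (langRHS_mono (Finset.subset_insert _ _))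
  | oneR Γ S Δ Δ' =>
    exact right h (hcl _ (by simp [Rule.prems])) (hmid (Θ := []) (Θ' := [.one])
      (by simp [langCed, langOf, sem]))
  | timesR Γ S Δ e f Δ' =>
    exact right h (hcl _ (by simp [Rule.prems])) (hmid (Θ := [e, f]) (Θ' := [.times e f])
      (by simp [langCed, langOf, sem]))
  | plusR Γ S Δ e f Δ' =>
    have he : langCed (Δ ++ e :: Δ') ≤ langCed (Δ ++ .plus e f :: Δ') :=
      langCed_middle_mono (Θ := [e]) (Θ' := [.plus e f])
        (by simp only [langCed_cons, langCed_nil, mul_one]; exact le_sup_left)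
    have hf : langCed (Δ ++ f :: Δ') ≤ langCed (Δ ++ .plus e f :: Δ') :=
      langCed_middle_mono (Θ := [f]) (Θ' := [.plus e f])
        (by simp only [langCed_cons, langCed_nil, mul_one]; exact le_sup_right)
    refine right h (hcl _ (by simp [Rule.prems])) ((langRHS_insert_mono he).trans ?_)
    rw [Finset.insert_comm]
    exact (langRHS_insert_mono hf).trans (by rw [Finset.insert_idem])
  | muR Γ S Δ e Δ' =>
    have he : (Exp.mu e).Closed :=
      h.1.2 _ (Finset.mem_insert_self _ _) _ (by simp)
    exact right h (hcl _ (by simp [Rule.prems])) (hmid (Θ := [e.unfold]) (Θ' := [.mu e])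
      (by simpa only [langCed_cons, langCed_nil, mul_one] using langOf_unfold_le he))

/-- The node `p` of the preproof carries a sequent with a counterexample of `n` unfoldings. -/
def Preproof.RefutedAt (P : Preproof α) (p : List ℕ) (n : ℕ) : Prop :=
  ∃ r, P.rule p = some r ∧ Refuted r.concl n

theorem Preproof.RefutedAt.step {P : Preproof α} {p : List ℕ} {n : ℕ} (h : P.RefutedAt p n) :
    ∃ i n', P.RefutedAt (p ++ [i]) n' ∧ n' ≤ n ∧ ∀ r, P.rule p = some r → r.IsMuL → n' < n := by
  obtain ⟨r, hr, h⟩ := h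
  obtain ⟨s, hs, n', hle, hlt, hs'⟩ := Rule.exists_refuted_prem h
  obtain ⟨i, hi, rfl⟩ := List.mem_iff_getElem.1 hs
  obtain ⟨r', hr', hc⟩ := P.children_concl p r hr i hi
  refine ⟨i, n', ⟨r', hr', hc ▸ hs'⟩, hle, fun q hq hmu => hlt ?_⟩
  rw [hr] at hq
  cases hq
  exact hmu

/-- A counterexample at the root is chased along a branch that must be infinite; the number of
unfoldings cannot decrease forever, so the branch has only finitely many `μ-l` steps. -/
theorem Preproof.Progressing.not_refutedAt_nil {P : Preproof α} (hP : P.Progressing) (n : ℕ) :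
    ¬ P.RefutedAt [] n := by
  intro h₀
  choose child grade hchild hle hlt using
    fun x : {x : List ℕ × ℕ // P.RefutedAt x.1 x.2} => x.2.step
  let f : ℕ → {x : List ℕ × ℕ // P.RefutedAt x.1 x.2} :=
    fun k => Nat.rec ⟨([], n), h₀⟩ (fun _ x => ⟨(x.1.1 ++ [child x], grade x), hchild x⟩) k
  let b : ℕ → ℕ := fun k => child (f k)
  have hpath : ∀ k, Preproof.pathOf b k = (f k).1.1 := by
    intro k
    induction k with
    | zero => rfl
    | succ k ih =>
      rw [Preproof.pathOf, List.range_succ, List.map_append]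
      change Preproof.pathOf b k ++ [child (f k)] = (f k).1.1 ++ [child (f k)]
      rw [ih]
  have hb : P.IsBranch b := by
    intro k
    obtain ⟨r, hr, -⟩ := (f k).2
    rw [hpath, hr]
    rfl
  have hanti : Antitone fun k => (f k).1.2 := antitone_nat_of_succ_le fun k => hle (f k)
  -- After the grade has reached its minimum `(f N).1.2`, no further `μ-l` step is possible.
  obtain ⟨N, hN⟩ : ∃ N, ∀ k, (f N).1.2 ≤ (f k).1.2 :=
    ⟨Function.argmin fun k => (f k).1.2, fun k => Function.argmin_le (fun k => (f k).1.2) k⟩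
  obtain ⟨k, hk, r, hr, hmu⟩ := hP b hb N
  rw [hpath] at hr
  have h₁ : (f (k + 1)).1.2 < (f k).1.2 := hlt (f k) r hr hmu
  have h₂ : (f k).1.2 ≤ (f N).1.2 := hanti hk
  have h₃ := hN (k + 1)
  omega

end Branch

/-- Theorem 3.5, soundness: if `μHKA ⊢∞ Γ → S` then
`L(Γ) ⊆ L(S)`. -/
theorem soundness_muHKA {α : Type} [Fintype α] [DecidableEq α] (s : Sqt α)
    (hc : s.ClosedSeq) (hg : s.GuardedSeq)
    (h : ProofInf s) :
    s.Valid := by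
  obtain ⟨P, ⟨r, hr, rfl⟩, hP⟩ := h
  intro w hw
  by_contra hn
  obtain ⟨n, hpar⟩ := exists_parseCed hc.1 hw
  exact hP.not_refutedAt_nil n ⟨r, hr, hc, w, hpar, hn⟩

end CFPT
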